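/- arXiv:2603.21831 — 5 statements merged into one kernel-verified Lean document; each statement's English description precedes it below -/
import Mathlib

section
/- Let f : ℝ^n → ℝ be locally Lipschitz and let φ be a nonnegative mollifier on ℝ^n with supp φ equal to the closed unit ball. Then the directional mollification converges pointwise: for every x ∈ ℝ^n, F̂_ε(x) → f(x) as ε → 0⁺. -/
/-!
`F_ε(x) - f(x)` and `D_ε(x)` are both averages against `φ_ε(x - ·)` of a function of size `O(ε)`:
if `φ` vanishes outside the ball of radius `R` and `f` is `K`-Lipschitz near `x`, then on the ball
of radius `εR` around `x` both `‖f s - f x‖` and `‖f°(s)(x - s)‖` are at most `K ‖x - s‖ ≤ K (εR)`,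
the latter because a one-sided directional derivative is a limit of difference quotients.
As `φ_ε` has the same `L¹` norm as `φ`, it follows that `‖F̂_ε(x) - f(x)‖ ≤ 2 K ε R ‖φ‖₁`.
-/

open MeasureTheory Filter Topology Metric

noncomputable section

abbrev Euc (n : ℕ) := EuclideanSpace ℝ (Fin n)

/-- The scaled mollifier `φ_ε(x) = ε^{-n} φ(x/ε)` on `ℝ^n`. -/
def mollScaled (n : ℕ) (ε : ℝ) (φ : Euc n → ℝ) : Euc n → ℝ :=
  fun x => (ε ^ n)⁻¹ * φ (ε⁻¹ • x)

open Module Function Set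
open scoped NNReal

variable {E F : Type*} [NormedAddCommGroup E] [NormedSpace ℝ E]
  [NormedAddCommGroup F] [NormedSpace ℝ F]

section RightLineDeriv

/-- The one-sided directional derivative of `f` at `x` in the direction `v` exists and equals `f'`;
this is the analogue of `HasLineDerivAt` for `t → 0⁺`. -/
def HasRightLineDerivAt (f : E → F) (f' : F) (x v : E) : Prop :=
  HasDerivWithinAt (fun t : ℝ => f (x + t • v)) f' (Ioi 0) 0

theorem hasRightLineDerivAt_iff_tendsto {f : E → F} {f' : F} {x v : E} :
    HasRightLineDerivAt f f' x v ↔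
      Tendsto (fun t : ℝ => t⁻¹ • (f (x + t • v) - f x)) (𝓝[>] 0) (𝓝 f') := by
  rw [HasRightLineDerivAt, hasDerivWithinAt_iff_tendsto_slope' self_notMem_Ioi]
  simp only [slope_fun_def, vsub_eq_sub, sub_zero, zero_smul, add_zero]

theorem hasRightLineDerivAt_iff_tendsto_div {f : E → ℝ} {f' : ℝ} {x v : E} :
    HasRightLineDerivAt f f' x v ↔
      Tendsto (fun t : ℝ => (f (x + t • v) - f x) / t) (𝓝[>] 0) (𝓝 f') := by
  simp only [hasRightLineDerivAt_iff_tendsto, smul_eq_mul, div_eq_inv_mul]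

theorem HasRightLineDerivAt.norm_le_of_lipschitzOnWith {f : E → F} {f' : F} {x v : E} {K : ℝ≥0}
    {t : Set E} (hf' : HasRightLineDerivAt f f' x v) (hf : LipschitzOnWith K f t) (ht : t ∈ 𝓝 x) :
    ‖f'‖ ≤ K * ‖v‖ := by
  have hline : Tendsto (fun u : ℝ => x + u • v) (𝓝[>] 0) (𝓝 x) :=
    Continuous.tendsto' (by fun_prop) 0 x (by simp) |>.mono_left nhdsWithin_le_nhds
  refine le_of_tendsto (hasRightLineDerivAt_iff_tendsto.1 hf').norm ?_
  filter_upwards [hline ht, self_mem_nhdsWithin] with u hu (hu0 : 0 < u)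
  rw [norm_smul, norm_inv, Real.norm_of_nonneg hu0.le, inv_mul_le_iff₀ hu0]
  calc ‖f (x + u • v) - f x‖ ≤ K * ‖x + u • v - x‖ := hf.norm_sub_le hu (mem_of_mem_nhds ht)
    _ = u * (K * ‖v‖) := by
      rw [add_sub_cancel_left, norm_smul, Real.norm_of_nonneg hu0.le, mul_left_comm]

end RightLineDeriv

section DilateKernel

/-- The rescaled kernel `φ_ε(y) = ε^{-d} φ(y/ε)`, where `d` is the dimension of `E`; it is
`mollScaled` on an arbitrary finite-dimensional space. -/
def dilateKernel (φ : E → ℝ) (ε : ℝ) (y : E) : ℝ :=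
  (ε ^ finrank ℝ E)⁻¹ * φ (ε⁻¹ • y)

variable {φ : E → ℝ} {ε R : ℝ}

theorem mollScaled_eq_dilateKernel (n : ℕ) (ε : ℝ) (φ : Euc n → ℝ) :
    mollScaled n ε φ = dilateKernel φ ε := by
  ext y
  rw [mollScaled, dilateKernel, finrank_euclideanSpace_fin]

theorem norm_dilateKernel (hε : 0 ≤ ε) (y : E) :
    ‖dilateKernel φ ε y‖ = dilateKernel (fun z => ‖φ z‖) ε y := by
  rw [dilateKernel, dilateKernel, norm_mul, Real.norm_of_nonneg (by positivity)]

theorem support_dilateKernel_subset (hε : 0 < ε) (hR : support φ ⊆ closedBall 0 R) :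
    support (dilateKernel φ ε) ⊆ closedBall 0 (ε * R) := by
  intro y hy
  have hmem : ε⁻¹ • y ∈ closedBall (0 : E) R := hR (right_ne_zero_of_mul hy)
  rwa [mem_closedBall_zero_iff, norm_smul, norm_inv, Real.norm_of_nonneg hε.le,
    inv_mul_le_iff₀ hε, ← mem_closedBall_zero_iff] at hmem

theorem dilateKernel_sub_eq_zero (hε : 0 < ε) (hR : support φ ⊆ closedBall 0 R) {x s : E}
    (hs : s ∉ closedBall x (ε * R)) : dilateKernel φ ε (x - s) = 0 := by
  refine notMem_support.1 fun h => hs (mem_closedBall_iff_norm'.2 ?_)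
  exact mem_closedBall_zero_iff.1 (support_dilateKernel_subset hε hR h)

variable [FiniteDimensional ℝ E] [MeasurableSpace E] [BorelSpace E] {μ : Measure E}
  [μ.IsAddHaarMeasure]

theorem integral_dilateKernel_sub (hε : 0 < ε) (x : E) :
    ∫ s, dilateKernel φ ε (x - s) ∂μ = ∫ y, φ y ∂μ := by
  rw [integral_sub_left_eq_self (dilateKernel φ ε) μ x]
  simp only [dilateKernel]
  rw [integral_const_mul, Measure.integral_comp_inv_smul_of_nonneg μ φ hε.le, smul_eq_mul,
    inv_mul_cancel_left₀ (by positivity)]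

theorem integrable_dilateKernel_sub (hε : 0 < ε) (hφ : Integrable φ μ) (x : E) :
    Integrable (fun s => dilateKernel φ ε (x - s)) μ :=
  ((hφ.comp_smul (inv_ne_zero hε.ne')).const_mul _).comp_sub_left x

end DilateKernel

section Mollify

variable [MeasurableSpace E]

/-- The mollification `∫ φ_ε(x - s) g(s) ds` of `g` at `x`. The integrand `g` may itself depend
on `x`, as it does in the directional derivative term. -/
def mollify (μ : Measure E) (φ : E → ℝ) (ε : ℝ) (g : E → F) (x : E) : F :=
  ∫ s, dilateKernel φ ε (x - s) • g s ∂μ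

/-- The directional mollification `F̂_ε = F_ε + D_ε` of `f`, where `f' s v` stands for the one-sided
derivative `f°(s)(v)`. -/
def dirMollify (μ : Measure E) (φ : E → ℝ) (ε : ℝ) (f : E → F) (f' : E → E → F) (x : E) : F :=
  mollify μ φ ε f x + mollify μ φ ε (fun s => f' s (x - s)) x

variable [FiniteDimensional ℝ E] [BorelSpace E] {μ : Measure E} [μ.IsAddHaarMeasure]
  {φ : E → ℝ} {ε R C : ℝ} {f g : E → F} {x : E}

theorem norm_mollify_le (hε : 0 < ε) (hφ : Integrable φ μ) (hR : support φ ⊆ closedBall 0 R)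
    (hg : ∀ᵐ s ∂μ, s ∈ closedBall x (ε * R) → ‖g s‖ ≤ C) :
    ‖mollify μ φ ε g x‖ ≤ C * ∫ y, ‖φ y‖ ∂μ := by
  rw [← integral_dilateKernel_sub hε x, ← integral_const_mul]
  refine norm_integral_le_of_norm_le ((integrable_dilateKernel_sub hε hφ.norm x).const_mul C) ?_
  filter_upwards [hg] with s hs
  rw [← norm_dilateKernel hε.le, norm_smul, mul_comm]
  by_cases hsx : s ∈ closedBall x (ε * R)
  · gcongr
    exact hs hsx
  · simp only [dilateKernel_sub_eq_zero hε hR hsx, norm_zero, mul_zero, le_refl]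

theorem integrable_dilateKernel_sub_smul (hε : 0 < ε) (hφ : Integrable φ μ)
    (hR : support φ ⊆ closedBall 0 R) (hg : ContinuousOn g (closedBall x (ε * R))) :
    Integrable (fun s => dilateKernel φ ε (x - s) • g s) μ := by
  have hsupp : support (fun s => dilateKernel φ ε (x - s) • g s) ⊆ closedBall x (ε * R) :=
    support_subset_iff'.2 fun s hs => by rw [dilateKernel_sub_eq_zero hε hR hs, zero_smul]
  rw [← integrableOn_iff_integrable_of_support_subset hsupp]
  exact (integrable_dilateKernel_sub hε hφ x).integrableOn.smul_continuousOn hg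
    (isCompact_closedBall x (ε * R))

variable [CompleteSpace F]

theorem mollify_sub_const (hε : 0 < ε) (hφ : ∫ y, φ y ∂μ = 1) (hR : support φ ⊆ closedBall 0 R)
    (hg : ContinuousOn g (closedBall x (ε * R))) (c : F) :
    mollify μ φ ε (fun s => g s - c) x = mollify μ φ ε g x - c := by
  have hφi : Integrable φ μ := .of_integral_ne_zero (hφ ▸ one_ne_zero)
  simp only [mollify, smul_sub]
  rw [integral_sub (integrable_dilateKernel_sub_smul hε hφi hR hg)
    ((integrable_dilateKernel_sub hε hφi x).smul_const c), integral_smul_const,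
    integral_dilateKernel_sub hε, hφ, one_smul]

theorem norm_dirMollify_sub_le {K : ℝ≥0} {t : Set E} {f' : E → E → F} (hε : 0 < ε)
    (hφ : ∫ y, φ y ∂μ = 1) (hR : support φ ⊆ closedBall 0 R) (hf : LipschitzOnWith K f t)
    (hf' : ∀ᵐ s ∂μ, s ∈ t → ∀ v, HasRightLineDerivAt f (f' s v) s v) (hx : x ∈ t)
    (ht : closedBall x (ε * R) ⊆ interior t) :
    ‖dirMollify μ φ ε f f' x - f x‖ ≤ 2 * (K * (ε * R) * ∫ y, ‖φ y‖ ∂μ) := by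
  have hφi : Integrable φ μ := .of_integral_ne_zero (hφ ▸ one_ne_zero)
  have hball : closedBall x (ε * R) ⊆ t := ht.trans interior_subset
  have hF : ‖mollify μ φ ε f x - f x‖ ≤ K * (ε * R) * ∫ y, ‖φ y‖ ∂μ := by
    rw [← mollify_sub_const hε hφ hR (hf.continuousOn.mono hball)]
    refine norm_mollify_le hε hφi hR (Eventually.of_forall fun s hs => ?_)
    exact (hf.norm_sub_le (hball hs) hx).trans (by gcongr; exact mem_closedBall_iff_norm.1 hs)
  have hD : ‖mollify μ φ ε (fun s => f' s (x - s)) x‖ ≤ K * (ε * R) * ∫ y, ‖φ y‖ ∂μ := by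
    refine norm_mollify_le hε hφi hR ?_
    filter_upwards [hf'] with s hs hsx
    refine ((hs (hball hsx) (x - s)).norm_le_of_lipschitzOnWith hf
      (mem_interior_iff_mem_nhds.1 (ht hsx))).trans ?_
    gcongr
    exact mem_closedBall_iff_norm'.1 hsx
  rw [dirMollify, add_sub_right_comm, two_mul]
  exact norm_add_le_of_le hF hD

theorem stmt1_general {K : ℝ≥0} {t : Set E} {f' : E → E → F} (ht : t ∈ 𝓝 x)
    (hf : LipschitzOnWith K f t) (hφ : ∫ y, φ y ∂μ = 1) (hR : support φ ⊆ closedBall 0 R)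
    (hf' : ∀ᵐ s ∂μ, s ∈ t → ∀ v, HasRightLineDerivAt f (f' s v) s v) :
    Tendsto (fun ε : ℝ => dirMollify μ φ ε f f' x) (𝓝[>] 0) (𝓝 (f x)) := by
  have hradius : Tendsto (fun ε : ℝ => ε * R) (𝓝[>] 0) (𝓝 0) :=
    Continuous.tendsto' (by fun_prop) 0 0 (zero_mul R) |>.mono_left nhdsWithin_le_nhds
  have hball : ∀ᶠ ε : ℝ in 𝓝[>] 0, closedBall x (ε * R) ⊆ interior t :=
    ((tendsto_closedBall_smallSets x).comp hradius).eventually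
      (eventually_smallSets_subset.2 (interior_mem_nhds.2 ht))
  have hbound : Tendsto (fun ε : ℝ => 2 * (K * (ε * R) * ∫ y, ‖φ y‖ ∂μ)) (𝓝[>] 0) (𝓝 0) := by
    simpa only [mul_zero, zero_mul] using
      ((hradius.const_mul (K : ℝ)).mul_const (∫ y, ‖φ y‖ ∂μ)).const_mul 2
  rw [tendsto_iff_norm_sub_tendsto_zero]
  refine squeeze_zero' (Eventually.of_forall fun _ => norm_nonneg _) ?_ hbound
  filter_upwards [hball, self_mem_nhdsWithin] with ε hεt hε
  exact norm_dirMollify_sub_le hε hφ hR hf hf' (mem_of_mem_nhds ht) hεt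

end Mollify

theorem stmt1 (n : ℕ) (f : Euc n → ℝ)
    -- `f` is locally Lipschitz
    (hf : LocallyLipschitz f)
    -- `φ` is a nonnegative mollifier supported in the closed unit ball
    (φ : Euc n → ℝ) (hφ_smooth : ContDiff ℝ (⊤ : ℕ∞) φ)
    (hφ_int : ∫ x, φ x = 1) (hφ_nonneg : ∀ x, 0 ≤ φ x)
    (hφ_supp : tsupport φ = closedBall (0 : Euc n) 1)
    -- `fdir s h` is the one-sided directional derivative `f°(s)(h)` (exists a.e.)
    (fdir : Euc n → Euc n → ℝ)
    (hfdir : ∀ᵐ s ∂(volume : Measure (Euc n)), ∀ h : Euc n,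
      Tendsto (fun t : ℝ => (f (s + t • h) - f s) / t) (𝓝[>] 0) (𝓝 (fdir s h)))
    (x : Euc n) :
    -- pointwise convergence of the directional mollification `F̂_ε = F_ε + D_ε` to `f`
    Tendsto (fun ε : ℝ =>
        (∫ s, f s * mollScaled n ε φ (x - s))
          + ∫ s, fdir s (x - s) * mollScaled n ε φ (x - s))
      (𝓝[>] 0) (𝓝 (f x)) := by
  obtain ⟨K, t, ht, hK⟩ := hf x
  simpa only [dirMollify, mollify, ← mollScaled_eq_dilateKernel, smul_eq_mul, mul_comm] using
    stmt1_general ht hK hφ_int (hφ_supp ▸ subset_tsupport φ)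
      (hfdir.mono fun s hs _ v => hasRightLineDerivAt_iff_tendsto_div.2 (hs v))
end
end

section
/- Let f : ℝ^n → ℝ be globally Lipschitz with Lipschitz constant L and let φ be a nonnegative mollifier on ℝ^n with supp φ equal to the closed unit ball. Then for every ε > 0 and every x ∈ ℝ^n the directional derivative term satisfies |D_ε(x)| ≤ L·ε, and consequently F̂_ε → f uniformly on compact subsets of ℝ^n as ε → 0⁺. -/
open MeasureTheory Filter Topology Metric

noncomputable section

/-! The kernel `φ_ε(x - s)` lives at scale `‖x - s‖ ≈ ε`: if `‖g s‖ ≤ L ‖x - s‖` for almost every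
`s`, then `‖∫ φ_ε(x - s) g s ds‖ ≤ L ε M` with `M = ∫ ‖y‖ |φ y| dy`, because multiplying `φ_ε` by
`‖·‖` gives `ε` times the rescaling of `‖·‖ φ`. A Lipschitz function provides two such `g`: the
directional derivative `f°(s)(x - s)`, which bounds `D_ε`, and the increment `f s - f x`, which
bounds `F_ε - f` since `∫ φ_ε = 1`. Both errors are therefore `O(ε)` uniformly in `x`, and `M ≤ 1`
for a nonnegative mollifier supported in the unit ball. -/

section DirectionalDerivative

variable {E F : Type*} [NormedAddCommGroup E] [NormedSpace ℝ E]
  [NormedAddCommGroup F] [NormedSpace ℝ F]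

theorem norm_le_of_lipschitzWith_of_tendsto_directional_slope {f : E → F} {L : NNReal}
    (hf : LipschitzWith L f) {s h : E} {v : F}
    (hv : Tendsto (fun t : ℝ => t⁻¹ • (f (s + t • h) - f s)) (𝓝[>] 0) (𝓝 v)) :
    ‖v‖ ≤ L * ‖h‖ := by
  refine le_of_tendsto hv.norm ?_
  filter_upwards [self_mem_nhdsWithin] with t (ht : 0 < t)
  have increment_le : ‖f (s + t • h) - f s‖ ≤ L * ‖h‖ * t := by
    calc ‖f (s + t • h) - f s‖ ≤ L * ‖s + t • h - s‖ := hf.norm_sub_le _ _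
      _ = L * ‖h‖ * t := by
        rw [add_sub_cancel_left, norm_smul, Real.norm_of_nonneg ht.le]; ring
  rwa [norm_smul, norm_inv, Real.norm_of_nonneg ht.le, inv_mul_le_iff₀ ht, mul_comm t]

end DirectionalDerivative

section FirstMoment

variable {E F : Type*} [NormedAddCommGroup E] [NormedAddCommGroup F] {φ : E → F} {R : ℝ}

theorem norm_mul_norm_le_of_tsupport_subset_closedBall
    (hφ : tsupport φ ⊆ closedBall 0 R) (y : E) : ‖y‖ * ‖φ y‖ ≤ R * ‖φ y‖ := by
  by_cases hy : y ∈ tsupport φ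
  · exact mul_le_mul_of_nonneg_right (mem_closedBall_zero_iff.mp (hφ hy)) (norm_nonneg _)
  · simp [image_eq_zero_of_notMem_tsupport hy]

variable [MeasurableSpace E] {μ : Measure E}

theorem integrable_norm_mul_norm_of_tsupport_subset_closedBall [OpensMeasurableSpace E]
    (hφ : tsupport φ ⊆ closedBall 0 R) (hφ_int : Integrable φ μ) :
    Integrable (fun y => ‖y‖ * ‖φ y‖) μ := by
  refine (hφ_int.norm.const_mul R).mono'
    (measurable_norm.aestronglyMeasurable.mul hφ_int.aestronglyMeasurable.norm)
    (Eventually.of_forall fun y => ?_)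
  rw [Real.norm_of_nonneg (by positivity)]
  exact norm_mul_norm_le_of_tsupport_subset_closedBall hφ y

theorem integral_norm_mul_norm_le_of_tsupport_subset_closedBall
    (hφ : tsupport φ ⊆ closedBall 0 R) (hφ_int : Integrable φ μ) :
    ∫ y, ‖y‖ * ‖φ y‖ ∂μ ≤ R * ∫ y, ‖φ y‖ ∂μ := by
  rw [← integral_const_mul]
  exact integral_mono_of_nonneg (Eventually.of_forall fun y => by positivity)
    (hφ_int.norm.const_mul R)
    (Eventually.of_forall (norm_mul_norm_le_of_tsupport_subset_closedBall hφ))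

end FirstMoment

section Dilate

variable {E : Type*} [NormedAddCommGroup E] [NormedSpace ℝ E] {ε : ℝ}

/-- The mass-preserving rescaling `φ_ε(x) = ε^{-d} φ(x/ε)` of a kernel on a real vector space of
dimension `d`; on `ℝ^n` it is `mollScaled`. -/
def dilate (ε : ℝ) (φ : E → ℝ) : E → ℝ :=
  fun x => (ε ^ Module.finrank ℝ E)⁻¹ * φ (ε⁻¹ • x)

theorem mollScaled_eq_dilate (n : ℕ) (ε : ℝ) (φ : Euc n → ℝ) :
    mollScaled n ε φ = dilate ε φ := by
  funext x
  simp only [mollScaled, dilate, finrank_euclideanSpace_fin]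

theorem norm_mul_norm_dilate (hε : 0 < ε) (φ : E → ℝ) (z : E) :
    ‖z‖ * ‖dilate ε φ z‖ = ε * dilate ε (fun y => ‖y‖ * ‖φ y‖) z := by
  simp only [dilate, norm_mul, norm_smul, norm_inv, norm_pow, Real.norm_of_nonneg hε.le]
  field_simp

variable [MeasurableSpace E] {μ : Measure E}
  {F : Type*} [NormedAddCommGroup F] [NormedSpace ℝ F] {L : ℝ} {g : E → F}

theorem ae_norm_dilate_smul_le (hε : 0 < ε) (φ : E → ℝ) {x : E}
    (hg : ∀ᵐ s ∂μ, ‖g s‖ ≤ L * ‖x - s‖) :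
    ∀ᵐ s ∂μ, ‖dilate ε φ (x - s) • g s‖
      ≤ L * ε * dilate ε (fun y => ‖y‖ * ‖φ y‖) (x - s) := by
  filter_upwards [hg] with s hs
  calc ‖dilate ε φ (x - s) • g s‖ ≤ ‖dilate ε φ (x - s)‖ * (L * ‖x - s‖) := by
        rw [norm_smul]; gcongr
    _ = L * (‖x - s‖ * ‖dilate ε φ (x - s)‖) := by ring
    _ = L * ε * dilate ε (fun y => ‖y‖ * ‖φ y‖) (x - s) := by
        rw [norm_mul_norm_dilate hε, mul_assoc]

variable [FiniteDimensional ℝ E] [BorelSpace E] [μ.IsAddHaarMeasure]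

theorem integrable_dilate_sub_left (hε : ε ≠ 0) {φ : E → ℝ} (hφ : Integrable φ μ) (x : E) :
    Integrable (fun s => dilate ε φ (x - s)) μ :=
  ((hφ.comp_smul (inv_ne_zero hε)).const_mul _).comp_sub_left x

theorem integral_dilate_sub_left (hε : 0 < ε) (φ : E → ℝ) (x : E) :
    ∫ s, dilate ε φ (x - s) ∂μ = ∫ y, φ y ∂μ := by
  have hpow : 0 < ε ^ Module.finrank ℝ E := by positivity
  rw [integral_sub_left_eq_self (dilate ε φ) μ x]
  simp only [dilate]
  rw [integral_const_mul, Measure.integral_comp_inv_smul_of_nonneg μ φ hε.le, smul_eq_mul,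
    inv_mul_cancel_left₀ hpow.ne']

theorem integrable_dilate_smul (hε : 0 < ε) {φ : E → ℝ} {x : E} (hφ : Integrable φ μ)
    (hφ_moment : Integrable (fun y => ‖y‖ * ‖φ y‖) μ) (hg_meas : AEStronglyMeasurable g μ)
    (hg : ∀ᵐ s ∂μ, ‖g s‖ ≤ L * ‖x - s‖) :
    Integrable (fun s => dilate ε φ (x - s) • g s) μ :=
  ((integrable_dilate_sub_left hε.ne' hφ_moment x).const_mul (L * ε)).mono'
    ((integrable_dilate_sub_left hε.ne' hφ x).aestronglyMeasurable.smul hg_meas)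
    (ae_norm_dilate_smul_le hε φ hg)

theorem norm_integral_dilate_smul_le (hε : 0 < ε) {φ : E → ℝ} {x : E}
    (hφ_moment : Integrable (fun y => ‖y‖ * ‖φ y‖) μ) (hg : ∀ᵐ s ∂μ, ‖g s‖ ≤ L * ‖x - s‖) :
    ‖∫ s, dilate ε φ (x - s) • g s ∂μ‖ ≤ L * ε * ∫ y, ‖y‖ * ‖φ y‖ ∂μ := by
  rw [← integral_dilate_sub_left hε _ x, ← integral_const_mul]
  exact norm_integral_le_of_norm_le
    ((integrable_dilate_sub_left hε.ne' hφ_moment x).const_mul (L * ε))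
    (ae_norm_dilate_smul_le hε φ hg)

end Dilate

section Mollification

variable {E F : Type*} [NormedAddCommGroup E] [NormedSpace ℝ E] [FiniteDimensional ℝ E]
  [MeasurableSpace E] [BorelSpace E] {μ : Measure E} [μ.IsAddHaarMeasure]
  [NormedAddCommGroup F] [NormedSpace ℝ F] {f : E → F} {L : NNReal} {φ : E → ℝ}

theorem norm_integral_dilate_smul_sub_le [CompleteSpace F] (hf : LipschitzWith L f)
    (hφ : ∫ y, φ y ∂μ = 1) (hφ_moment : Integrable (fun y => ‖y‖ * ‖φ y‖) μ)
    {ε : ℝ} (hε : 0 < ε) (x : E) :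
    ‖(∫ s, dilate ε φ (x - s) • f s ∂μ) - f x‖ ≤ L * ε * ∫ y, ‖y‖ * ‖φ y‖ ∂μ := by
  have hφ_int : Integrable φ μ := integrable_of_integral_eq_one hφ
  have increment_le : ∀ᵐ s ∂μ, ‖f s - f x‖ ≤ L * ‖x - s‖ := Eventually.of_forall fun s => by
    simpa only [norm_sub_rev s x] using hf.norm_sub_le s x
  have increment_integrable : Integrable (fun s => dilate ε φ (x - s) • (f s - f x)) μ :=
    integrable_dilate_smul hε hφ_int hφ_moment
      (hf.continuous.sub continuous_const).aestronglyMeasurable increment_le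
  have const_integrable : Integrable (fun s => dilate ε φ (x - s) • f x) μ :=
    (integrable_dilate_sub_left hε.ne' hφ_int x).smul_const (f x)
  have integral_eq : ∫ s, dilate ε φ (x - s) • f s ∂μ
      = (∫ s, dilate ε φ (x - s) • (f s - f x) ∂μ) + f x := by
    calc ∫ s, dilate ε φ (x - s) • f s ∂μ
        = ∫ s, (dilate ε φ (x - s) • (f s - f x) + dilate ε φ (x - s) • f x) ∂μ := by
          simp only [← smul_add, sub_add_cancel]
      _ = (∫ s, dilate ε φ (x - s) • (f s - f x) ∂μ) + f x := by
          rw [integral_add increment_integrable const_integrable, integral_smul_const,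
            integral_dilate_sub_left hε, hφ, one_smul]
  rw [integral_eq, add_sub_cancel_right]
  exact norm_integral_dilate_smul_le hε hφ_moment increment_le

variable {fdir : E → E → F}

theorem norm_integral_dilate_smul_dirDeriv_le (hf : LipschitzWith L f)
    (hφ_moment : Integrable (fun y => ‖y‖ * ‖φ y‖) μ)
    (hfdir : ∀ᵐ s ∂μ, ∀ h : E,
      Tendsto (fun t : ℝ => t⁻¹ • (f (s + t • h) - f s)) (𝓝[>] 0) (𝓝 (fdir s h)))
    {ε : ℝ} (hε : 0 < ε) (x : E) :
    ‖∫ s, dilate ε φ (x - s) • fdir s (x - s) ∂μ‖ ≤ L * ε * ∫ y, ‖y‖ * ‖φ y‖ ∂μ :=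
  norm_integral_dilate_smul_le hε hφ_moment <| hfdir.mono fun _ hs =>
    norm_le_of_lipschitzWith_of_tendsto_directional_slope hf (hs _)

theorem stmt2_general [CompleteSpace F] (hf : LipschitzWith L f)
    (hφ : ∫ y, φ y ∂μ = 1) (hφ_moment : Integrable (fun y => ‖y‖ * ‖φ y‖) μ)
    (hfdir : ∀ᵐ s ∂μ, ∀ h : E,
      Tendsto (fun t : ℝ => t⁻¹ • (f (s + t • h) - f s)) (𝓝[>] 0) (𝓝 (fdir s h))) :
    (∀ ε : ℝ, 0 < ε → ∀ x : E,
        ‖∫ s, dilate ε φ (x - s) • fdir s (x - s) ∂μ‖ ≤ L * ε * ∫ y, ‖y‖ * ‖φ y‖ ∂μ)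
    ∧ TendstoUniformly (fun (ε : ℝ) (x : E) =>
          (∫ s, dilate ε φ (x - s) • f s ∂μ) + ∫ s, dilate ε φ (x - s) • fdir s (x - s) ∂μ)
        f (𝓝[>] 0) := by
  have dirTerm_le {ε : ℝ} (hε : 0 < ε) (x : E) :=
    norm_integral_dilate_smul_dirDeriv_le hf hφ_moment hfdir hε x
  refine ⟨fun ε hε x => dirTerm_le hε x, Metric.tendstoUniformly_iff.mpr fun δ hδ => ?_⟩
  set M := ∫ y, ‖y‖ * ‖φ y‖ ∂μ
  have error_tendsto : Tendsto (fun ε : ℝ => L * ε * M + L * ε * M) (𝓝[>] 0) (𝓝 0) :=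
    (Continuous.tendsto' (by fun_prop) 0 0 (by simp)).mono_left nhdsWithin_le_nhds
  filter_upwards [self_mem_nhdsWithin, error_tendsto.eventually_lt_const hδ]
    with ε (hε : 0 < ε) error_lt x
  rw [dist_comm, dist_eq_norm, add_sub_right_comm]
  exact (norm_add_le_of_le (norm_integral_dilate_smul_sub_le hf hφ hφ_moment hε x)
    (dirTerm_le hε x)).trans_lt error_lt

end Mollification

theorem stmt2 (n : ℕ) (f : Euc n → ℝ) (L : NNReal)
    -- `f` is globally Lipschitz with constant `L`
    (hf : LipschitzWith L f)
    -- `φ` is a nonnegative mollifier supported in the closed unit ball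
    (φ : Euc n → ℝ) (hφ_smooth : ContDiff ℝ (⊤ : ℕ∞) φ)
    (hφ_int : ∫ x, φ x = 1) (hφ_nonneg : ∀ x, 0 ≤ φ x)
    (hφ_supp : tsupport φ = closedBall (0 : Euc n) 1)
    -- `fdir s h` is the one-sided directional derivative `f°(s)(h)` (exists a.e.)
    (fdir : Euc n → Euc n → ℝ)
    (hfdir : ∀ᵐ s ∂(volume : Measure (Euc n)), ∀ h : Euc n,
      Tendsto (fun t : ℝ => (f (s + t • h) - f s) / t) (𝓝[>] 0) (𝓝 (fdir s h))) :
    -- the bound `|D_ε(x)| ≤ L ε` ...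
    (∀ ε : ℝ, 0 < ε → ∀ x : Euc n,
        |∫ s, fdir s (x - s) * mollScaled n ε φ (x - s)| ≤ (L : ℝ) * ε)
    -- ... and uniform convergence of `F̂_ε = F_ε + D_ε` to `f` on compact sets
    ∧ (∀ K : Set (Euc n), IsCompact K →
        TendstoUniformlyOn (fun (ε : ℝ) (x : Euc n) =>
            (∫ s, f s * mollScaled n ε φ (x - s))
              + ∫ s, fdir s (x - s) * mollScaled n ε φ (x - s))
          f (𝓝[>] 0) K) := by
  have hφ_integrable : Integrable φ := integrable_of_integral_eq_one hφ_int
  have moment_le_one : ∫ y, ‖y‖ * ‖φ y‖ ≤ 1 := by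
    simpa only [Real.norm_of_nonneg (hφ_nonneg _), hφ_int, mul_one] using
      integral_norm_mul_norm_le_of_tsupport_subset_closedBall hφ_supp.le hφ_integrable
  obtain ⟨bound, convergence⟩ := stmt2_general hf hφ_int
    (integrable_norm_mul_norm_of_tsupport_subset_closedBall hφ_supp.le hφ_integrable)
    (by simpa only [smul_eq_mul, inv_mul_eq_div] using hfdir)
  simp only [mollScaled_eq_dilate, mul_comm _ (dilate _ _ _)]
  exact ⟨fun ε hε x => (bound ε hε x).trans (mul_le_of_le_one_right (by positivity) moment_le_one),
    fun K _ => convergence.tendstoUniformlyOn⟩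
end
end

section
/- Let f : ℝ → ℝ^n be locally integrable and differentiable almost everywhere with derivative Df whose components are locally integrable, let φ be a mollifier on ℝ, and let ε > 0. Then for every m ∈ ℕ the m-th derivative of the directional derivative term D_ε satisfies D_ε^{(m)} = m·(Df * φ_ε^{(m−1)}) + Df * (id·φ_ε^{(m)}), where id(x) = x. -/
open MeasureTheory Filter Topology

noncomputable section

/-- The scaled mollifier `φ_ε(x) = ε⁻¹ φ(x/ε)` on `ℝ`. -/
def mollR (ε : ℝ) (φ : ℝ → ℝ) : ℝ → ℝ := fun x => ε⁻¹ * φ (x / ε)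

/-!
`D_ε` is the convolution of `Df` with the smooth, compactly supported kernel `x ↦ x * φ_ε x`, so all
derivatives may be moved onto the kernel. In the Leibniz expansion of the `m`-th derivative of
`x * φ_ε x` only two terms survive, because the derivatives of `x` of order at least two vanish.
-/

section IteratedDeriv

variable {𝕜 F : Type*} [NontriviallyNormedField 𝕜] [NormedAddCommGroup F] [NormedSpace 𝕜 F]
  {m : ℕ} {g : 𝕜 → F}

-- At `m = 0` the subtraction `m - 1` is truncated, but its term carries the factor `0`.
lemma iteratedDeriv_fun_id_smul {x : 𝕜} (hg : ContDiffAt 𝕜 m g x) :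
    iteratedDeriv m (fun y => y • g y) x =
      m • iteratedDeriv (m - 1) g x + x • iteratedDeriv m g x := by
  have leibniz : iteratedDeriv m (fun y => y • g y) x =
      ∑ i ∈ Finset.range (m + 1),
        m.choose i • (iteratedDeriv i id x • iteratedDeriv (m - i) g x) := by
    simpa only [iteratedDerivWithin_univ] using!
      iteratedDerivWithin_smul (Set.mem_univ x) uniqueDiffOn_univ
        contDiff_id.contDiffWithinAt hg.contDiffWithinAt
  rw [leibniz]
  cases m with
  | zero => simp
  | succ k =>
    rw [Finset.sum_range_succ', Finset.sum_range_succ']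
    simp [iteratedDeriv_id]

lemma hasCompactSupport_iteratedDeriv (hg : HasCompactSupport g) (m : ℕ) :
    HasCompactSupport (iteratedDeriv m g) :=
  (hg.iteratedFDeriv (𝕜 := 𝕜) m).comp_left
    (g := fun p : 𝕜 [×m]→L[𝕜] F => p fun _ => 1) rfl

end IteratedDeriv

section Convolution

open scoped Convolution

variable {𝕜 E E' F : Type*} [RCLike 𝕜]
  [NormedAddCommGroup E] [NormedSpace 𝕜 E] [NormedAddCommGroup E'] [NormedSpace 𝕜 E']
  [NormedAddCommGroup F] [NormedSpace 𝕜 F] [NormedSpace ℝ F]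
  (L : E →L[𝕜] E' →L[𝕜] F) {μ : Measure 𝕜} [μ.IsAddLeftInvariant] [SFinite μ]
  {u : 𝕜 → E} {g : 𝕜 → E'} {m : ℕ}

lemma iteratedDeriv_convolution_right (hu : LocallyIntegrable u μ) (hgc : HasCompactSupport g)
    (hg : ContDiff 𝕜 m g) :
    iteratedDeriv m (u ⋆[L, μ] g) = u ⋆[L, μ] iteratedDeriv m g := by
  induction m with
  | zero => simp only [iteratedDeriv_zero]
  | succ k ih =>
    have hgk : ContDiff 𝕜 1 (iteratedDeriv k g) := by
      rw [iteratedDeriv_eq_iterate]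
      exact ContDiff.iterate_deriv' 1 k (by simpa [add_comm] using hg)
    rw [iteratedDeriv_succ, ih (hg.of_le (by exact_mod_cast k.le_succ)), iteratedDeriv_succ]
    ext x
    exact ((hasCompactSupport_iteratedDeriv hgc k).hasDerivAt_convolution_right L hu hgk x).deriv

theorem stmt6_general (hu : LocallyIntegrable u μ) (hgc : HasCompactSupport g)
    (hg : ContDiff 𝕜 m g) :
    iteratedDeriv m (u ⋆[L, μ] fun x => x • g x) =
      m • (u ⋆[L, μ] iteratedDeriv (m - 1) g) + (u ⋆[L, μ] fun x => x • iteratedDeriv m g x) := by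
  have leibniz : iteratedDeriv m (fun x => x • g x) =
      (m : 𝕜) • iteratedDeriv (m - 1) g + fun x => x • iteratedDeriv m g x := by
    ext x
    simp [iteratedDeriv_fun_id_smul hg.contDiffAt, Nat.cast_smul_eq_nsmul]
  have compact_smul : HasCompactSupport fun x => x • g x := hgc.smul_left (f := id)
  have exists_lower : ConvolutionExists u ((m : 𝕜) • iteratedDeriv (m - 1) g) L μ :=
    ((hasCompactSupport_iteratedDeriv hgc _).smul_left
      (f := fun _ => (m : 𝕜))).convolutionExists_right L hu
        ((hg.continuous_iteratedDeriv _ (by exact_mod_cast m.sub_le 1)).const_smul (m : 𝕜))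
  have exists_top : ConvolutionExists u (fun x => x • iteratedDeriv m g x) L μ :=
    (hasCompactSupport_iteratedDeriv hgc _).smul_left.convolutionExists_right L hu
      (continuous_id.smul (hg.continuous_iteratedDeriv _ le_rfl))
  rw [iteratedDeriv_convolution_right L hu compact_smul (contDiff_id.smul hg), leibniz,
    exists_lower.distrib_add exists_top, convolution_smul, Nat.cast_smul_eq_nsmul]

end Convolution

section Mollifier

variable {φ : ℝ → ℝ} {ε : ℝ}

lemma contDiff_mollR {k : WithTop ℕ∞} (hφ : ContDiff ℝ k φ) : ContDiff ℝ k (mollR ε φ) :=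
  contDiff_const.mul (hφ.comp (contDiff_id.div_const ε))

lemma hasCompactSupport_mollR (hε : ε ≠ 0) (hφ : HasCompactSupport φ) :
    HasCompactSupport (mollR ε φ) := by
  simpa only [smul_eq_mul, inv_mul_eq_div] using!
    (hφ.comp_smul (inv_ne_zero hε)).mul_left (f := fun _ => ε⁻¹)

end Mollifier

theorem stmt6 (n : ℕ) (f : ℝ → EuclideanSpace ℝ (Fin n))
    -- `f` is locally integrable
    (hf : LocallyIntegrable f volume)
    -- `f` is differentiable almost everywhere, with locally integrable derivative `Df`
    (Df : ℝ → EuclideanSpace ℝ (Fin n))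
    (hDf : ∀ᵐ x ∂(volume : Measure ℝ), HasDerivAt f (Df x) x)
    (hDf_loc : LocallyIntegrable Df volume)
    -- `φ` is a mollifier on `ℝ`
    (φ : ℝ → ℝ) (hφ_smooth : ContDiff ℝ (⊤ : ℕ∞) φ) (hφ_cpt : HasCompactSupport φ)
    (hφ_int : ∫ x, φ x = 1)
    (ε : ℝ) (hε : 0 < ε)
    -- the directional derivative term `D_ε(t) = ∫ Df(s)·(t-s)·φ_ε(t-s) ds`
    (Dε : ℝ → EuclideanSpace ℝ (Fin n))
    (hDε : ∀ t, Dε t = ∫ s, ((t - s) * mollR ε φ (t - s)) • Df s) :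
    -- `D_ε^{(m)} = m·(Df * φ_ε^{(m-1)}) + Df * (id·φ_ε^{(m)})`
    ∀ m : ℕ, 1 ≤ m → ∀ t,
      iteratedDeriv m Dε t
        = (m : ℝ) • (∫ s, iteratedDeriv (m - 1) (mollR ε φ) (t - s) • Df s)
            + ∫ s, ((t - s) * iteratedDeriv m (mollR ε φ) (t - s)) • Df s := by
  intro m _ t
  rw [funext hDε, Nat.cast_smul_eq_nsmul]
  -- A convolution along `L` integrates `L (Df s) (g (t - s))`, which is `g (t - s) • Df s` here.
  exact congrFun (stmt6_general (ContinuousLinearMap.lsmul ℝ ℝ).flip hDf_loc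
    (hasCompactSupport_mollR hε.ne' hφ_cpt)
    (contDiff_mollR (hφ_smooth.of_le (by exact_mod_cast le_top)))) t
end
end

section
/- Let y₀, y₁, y₂ ∈ ℝ with y₀ > y₁ and y₁ < y₂, let ḡ : ℝ → ℝ be given by ḡ(t) = y₀ + (y₁−y₀)t for t ≤ 1 and ḡ(t) = y₁ + (y₂−y₁)(t−1) for t ≥ 1, and let φ be a nonnegative mollifier on ℝ with supp φ = [−1,1] and φ(0) > 0. Then for every ε > 0 the directional derivative term D_ε of ḡ satisfies D_ε′(1) = 0 and D_ε″(1) = φ_ε(0)·(y₂ + y₀ − 2y₁) > 0; in particular t = 1 is a local minimum of D_ε. -/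
open MeasureTheory Filter Topology

noncomputable section

/-- The extension `ḡ` of the scalar two-segment function through `y₀, y₁, y₂`. -/
def gbar (y0 y1 y2 : ℝ) : ℝ → ℝ :=
  fun t => if t ≤ 1 then y0 + (y1 - y0) * t else y1 + (y2 - y1) * (t - 1)

/-- The (almost everywhere) derivative of `ḡ`. -/
def Dgbar (y0 y1 y2 : ℝ) : ℝ → ℝ :=
  fun t => if t ≤ 1 then y1 - y0 else y2 - y1

/-- The conventional mollification `G_ε = ḡ * φ_ε`. -/
def Gconv (ε : ℝ) (φ : ℝ → ℝ) (y0 y1 y2 : ℝ) : ℝ → ℝ :=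
  fun t => ∫ s, mollR ε φ (t - s) * gbar y0 y1 y2 s

/-- The directional derivative term `D_ε(t) = ∫ Dḡ(s)·(t-s)·φ_ε(t-s) ds`. -/
def Dterm (ε : ℝ) (φ : ℝ → ℝ) (y0 y1 y2 : ℝ) : ℝ → ℝ :=
  fun t => ∫ s, Dgbar y0 y1 y2 s * ((t - s) * mollR ε φ (t - s))

/-- The directional mollification `Ĝ_ε = G_ε + D_ε`. -/
def Ghat (ε : ℝ) (φ : ℝ → ℝ) (y0 y1 y2 : ℝ) : ℝ → ℝ :=
  fun t => Gconv ε φ y0 y1 y2 t + Dterm ε φ y0 y1 y2 t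

/-!
Since `Dḡ` is a step function with a single jump `c = y₂ + y₀ - 2y₁` at `1`, convolving it with
`k(u) = u φ_ε(u)` gives a constant plus `c ∫_{u ≤ t - 1} k(u) du`. Hence
`D_ε'(t) = c (t - 1) φ_ε(t - 1)`, which vanishes at `t = 1` and has derivative `c φ_ε(0)` there.
-/

section StepConvolution

variable {E : Type*} [NormedAddCommGroup E] [NormedSpace ℝ E]

theorem integral_ite_le_smul_comp_sub {k : ℝ → E} (hk : Integrable k) (a p q t : ℝ) :
    ∫ s, (if s ≤ a then p else q) • k (t - s) =
      p • (∫ u, k u) + (q - p) • ∫ u in Set.Iic (t - a), k u := by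
  have step_eq (u : ℝ) : (if t - u ≤ a then p else q) • k u =
      p • k u + (q - p) • (Set.Iio (t - a)).indicator k u := by
    by_cases hu : u < t - a
    · rw [if_neg (by linarith), Set.indicator_of_mem (Set.mem_Iio.2 hu), ← add_smul,
        add_sub_cancel]
    · rw [if_pos (by linarith), Set.indicator_of_notMem (by simpa using hu), smul_zero, add_zero]
  calc ∫ s, (if s ≤ a then p else q) • k (t - s)
      = ∫ u, (if t - u ≤ a then p else q) • k u := by
        rw [← integral_sub_left_eq_self _ volume t]
        simp only [sub_sub_cancel]
    _ = ∫ u, p • k u + (q - p) • (Set.Iio (t - a)).indicator k u :=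
        integral_congr_ae (.of_forall step_eq)
    _ = p • (∫ u, k u) + (q - p) • ∫ u in Set.Iic (t - a), k u := by
        have hk_indicator := hk.indicator (measurableSet_Iio (a := t - a))
        rw [integral_add (hk.fun_smul p) (hk_indicator.fun_smul (q - p)), integral_smul,
          integral_smul, integral_indicator measurableSet_Iio, integral_Iic_eq_integral_Iio]

variable [CompleteSpace E]

theorem hasDerivAt_setIntegral_Iic {k : ℝ → E} {x : ℝ} (hk : Integrable k)
    (hx : ContinuousAt k x) : HasDerivAt (fun y ↦ ∫ u in Set.Iic y, k u) (k x) x := by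
  have split_integral (y : ℝ) :
      ∫ u in Set.Iic y, k u = (∫ u in Set.Iic 0, k u) + ∫ u in (0)..y, k u := by
    rw [← intervalIntegral.integral_Iic_sub_Iic hk.integrableOn hk.integrableOn, add_sub_cancel]
  rw [funext split_integral]
  exact (intervalIntegral.integral_hasDerivAt_right hk.intervalIntegrable
    hk.aestronglyMeasurable.stronglyMeasurableAtFilter hx).const_add _

theorem hasDerivAt_integral_ite_le_smul_comp_sub {k : ℝ → E} {a t : ℝ} (hk : Integrable k)
    (hkt : ContinuousAt k (t - a)) (p q : ℝ) :
    HasDerivAt (fun t ↦ ∫ s, (if s ≤ a then p else q) • k (t - s)) ((q - p) • k (t - a)) t := by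
  simp only [integral_ite_le_smul_comp_sub hk]
  exact (((hasDerivAt_setIntegral_Iic hk hkt).comp_sub_const t a).const_smul (q - p)).const_add _

end StepConvolution

theorem hasDerivAt_sub_smul_of_continuousAt {𝕜 E : Type*} [NontriviallyNormedField 𝕜]
    [NormedAddCommGroup E] [NormedSpace 𝕜 E] {f : 𝕜 → E} {a : 𝕜} (hf : ContinuousAt f a) :
    HasDerivAt (fun x ↦ (x - a) • f x) (f a) a := by
  rw [hasDerivAt_iff_tendsto_slope]
  refine (hf.tendsto.mono_left nhdsWithin_le_nhds).congr' ?_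
  filter_upwards [self_mem_nhdsWithin] with x hx
  rw [slope_def_module, sub_self, zero_smul, sub_zero, inv_smul_smul₀ (sub_ne_zero.2 hx)]

section ScaledKernel

variable {φ : ℝ → ℝ} {ε : ℝ}

theorem continuous_mollR (hφ : Continuous φ) : Continuous (mollR ε φ) :=
  continuous_const.mul (hφ.comp (continuous_id.div_const ε))

theorem integrable_mul_mollR (hε : ε ≠ 0) (hφ : Integrable fun u ↦ u * φ u) :
    Integrable fun u ↦ u * mollR ε φ u := by
  refine (hφ.comp_div hε).congr (.of_forall fun u ↦ ?_)
  simp only [mollR]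
  ring

theorem mollR_zero_pos (hε : 0 < ε) (hφ : 0 < φ 0) : 0 < mollR ε φ 0 := by
  simp only [mollR, zero_div]
  positivity

variable (y0 y1 y2 : ℝ)

theorem hasDerivAt_Dterm (hε : ε ≠ 0) (hφ : Continuous φ) (hφ_moment : Integrable fun u ↦ u * φ u)
    (t : ℝ) : HasDerivAt (Dterm ε φ y0 y1 y2)
      ((y2 + y0 - 2 * y1) * ((t - 1) * mollR ε φ (t - 1))) t := by
  have hk : Continuous fun u ↦ u * mollR ε φ u := continuous_id.mul (continuous_mollR hφ)
  have jump : y2 + y0 - 2 * y1 = (y2 - y1) - (y1 - y0) := by ring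
  rw [jump]
  exact hasDerivAt_integral_ite_le_smul_comp_sub (integrable_mul_mollR hε hφ_moment)
    hk.continuousAt (y1 - y0) (y2 - y1)

theorem hasDerivAt_deriv_Dterm_one (hε : ε ≠ 0) (hφ : Continuous φ)
    (hφ_moment : Integrable fun u ↦ u * φ u) :
    HasDerivAt (deriv (Dterm ε φ y0 y1 y2)) (mollR ε φ 0 * (y2 + y0 - 2 * y1)) 1 := by
  have deriv_eq : deriv (Dterm ε φ y0 y1 y2) =
      fun t ↦ (y2 + y0 - 2 * y1) * ((t - 1) * mollR ε φ (t - 1)) :=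
    funext fun t ↦ (hasDerivAt_Dterm y0 y1 y2 hε hφ hφ_moment t).deriv
  have hm : Continuous fun t ↦ mollR ε φ (t - 1) :=
    (continuous_mollR hφ).comp (continuous_sub_right 1)
  rw [deriv_eq, mul_comm (mollR ε φ 0)]
  simpa only [smul_eq_mul, sub_self] using
    (hasDerivAt_sub_smul_of_continuousAt (hm.continuousAt (x := 1))).const_mul (y2 + y0 - 2 * y1)

end ScaledKernel

theorem stmt8_general (y0 y1 y2 : ℝ) (hy : 2 * y1 < y2 + y0) (φ : ℝ → ℝ) (hφ : Continuous φ)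
    (hφ_moment : Integrable fun u ↦ u * φ u) (hφ0 : 0 < φ 0) (ε : ℝ) (hε : 0 < ε) :
    deriv (Dterm ε φ y0 y1 y2) 1 = 0
    ∧ deriv (deriv (Dterm ε φ y0 y1 y2)) 1 = mollR ε φ 0 * (y2 + y0 - 2 * y1)
    ∧ 0 < mollR ε φ 0 * (y2 + y0 - 2 * y1)
    ∧ IsLocalMin (Dterm ε φ y0 y1 y2) 1 := by
  have hD := hasDerivAt_Dterm y0 y1 y2 hε.ne' hφ hφ_moment 1
  have deriv_one : deriv (Dterm ε φ y0 y1 y2) 1 = 0 := by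
    rw [hD.deriv, sub_self, zero_mul, mul_zero]
  have deriv_deriv_one := (hasDerivAt_deriv_Dterm_one y0 y1 y2 hε.ne' hφ hφ_moment).deriv
  have curvature_pos : 0 < mollR ε φ 0 * (y2 + y0 - 2 * y1) :=
    mul_pos (mollR_zero_pos hε hφ0) (sub_pos.2 hy)
  exact ⟨deriv_one, deriv_deriv_one, curvature_pos,
    isLocalMin_of_deriv_deriv_pos (deriv_deriv_one ▸ curvature_pos) deriv_one hD.continuousAt⟩

theorem stmt8 (y0 y1 y2 : ℝ) (hy0 : y1 < y0) (hy2 : y1 < y2)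
    -- `φ` is a nonnegative mollifier on `ℝ` with support `[-1,1]` and `φ(0) > 0`
    (φ : ℝ → ℝ) (hφ_smooth : ContDiff ℝ (⊤ : ℕ∞) φ)
    (hφ_int : ∫ x, φ x = 1) (hφ_nonneg : ∀ x, 0 ≤ φ x)
    (hφ_supp : tsupport φ = Set.Icc (-1 : ℝ) 1) (hφ0 : 0 < φ 0)
    (ε : ℝ) (hε : 0 < ε) :
    -- `D_ε′(1) = 0`, `D_ε″(1) = φ_ε(0)(y₂ + y₀ − 2y₁) > 0`, and `t = 1` is a
    -- local minimum of `D_ε`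
    deriv (Dterm ε φ y0 y1 y2) 1 = 0
    ∧ deriv (deriv (Dterm ε φ y0 y1 y2)) 1 = mollR ε φ 0 * (y2 + y0 - 2 * y1)
    ∧ 0 < mollR ε φ 0 * (y2 + y0 - 2 * y1)
    ∧ IsLocalMin (Dterm ε φ y0 y1 y2) 1 := by
  have hφ_compact : HasCompactSupport φ :=
    .of_support_subset_isCompact isCompact_Icc (hφ_supp ▸ subset_tsupport φ)
  exact stmt8_general y0 y1 y2 (by linarith) φ hφ_smooth.continuous
    ((continuous_id.mul hφ_smooth.continuous).integrable_of_hasCompactSupport hφ_compact.mul_left)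
    hφ0 ε hε
end
end

section
/- Let f̄ : ℝ → ℝ^n be the extension of the (p+1)-points-p-segments curve through P₀, …, P_p ∈ ℝ^n (p ≥ 2), and let φ be an even nonnegative mollifier on ℝ with supp φ = [−1,1]. Then for every ε ∈ (0,1) and every k ∈ {1, …, p−1}, the directional mollification F̂_ε of f̄ satisfies F̂_ε(k) = f(k) = P_k; that is, all interior waypoints are preserved exactly. -/
open MeasureTheory Filter Topology

noncomputable section

/-- The index `r ∈ {1,…,p}` of the segment containing `t` (clamped, so that the
first and last segments are extended affinely). -/
def segIdx (p : ℕ) (t : ℝ) : ℤ := max 1 (min (p : ℤ) ⌈t⌉)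

/-- The extension `f̄` of the `(p+1)`-points-`p`-segments curve through
`P 0, …, P p`: on `[r-1, r]` it is `P_{r-1} + (t-(r-1)) • (P_r - P_{r-1})`,
extended by the affine formula of the first segment for `t ≤ 0` and of the last
segment for `t ≥ p`. -/
def fbarP {n : ℕ} (p : ℕ) (P : ℕ → Euc n) : ℝ → Euc n :=
  fun t => P (segIdx p t - 1).toNat
    + (t - ((segIdx p t : ℝ) - 1)) • (P (segIdx p t).toNat - P (segIdx p t - 1).toNat)

/-- The (almost everywhere) derivative of `f̄`. -/
def DfbarP {n : ℕ} (p : ℕ) (P : ℕ → Euc n) : ℝ → Euc n :=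
  fun t => P (segIdx p t).toNat - P (segIdx p t - 1).toNat

/-- The conventional mollification `F_ε = f̄ * φ_ε` (componentwise). -/
def FconvP {n : ℕ} (ε : ℝ) (φ : ℝ → ℝ) (p : ℕ) (P : ℕ → Euc n) : ℝ → Euc n :=
  fun t => ∫ s, mollR ε φ (t - s) • fbarP p P s

/-- The directional derivative term `D_ε(t) = ∫ Df̄(s)·(t-s)·φ_ε(t-s) ds`. -/
def DdirP {n : ℕ} (ε : ℝ) (φ : ℝ → ℝ) (p : ℕ) (P : ℕ → Euc n) : ℝ → Euc n :=
  fun t => ∫ s, ((t - s) * mollR ε φ (t - s)) • DfbarP p P s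

/-- The directional mollification `F̂_ε = F_ε + D_ε`. -/
def FhatP {n : ℕ} (ε : ℝ) (φ : ℝ → ℝ) (p : ℕ) (P : ℕ → Euc n) : ℝ → Euc n :=
  fun t => FconvP ε φ p P t + DdirP ε φ p P t

/-!
For `0 < |s - k| < 1` the line tangent to `f̄` at `s` is the line through one of the two segments
meeting at the interior waypoint `P k`, so it takes the value `P k` at time `k`:
`f̄(s) + (k - s) • Df̄(s) = P k`. The left-hand side, weighted by `φ_ε(k - s)` and integrated over
`s`, is exactly `F̂_ε(k)`; since `φ_ε` has mass one and is supported in `[-1, 1]`, this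
integral is `P k`.
-/

section WeightedIntegral

variable {α E : Type*} [MeasurableSpace α] {μ : Measure α}

theorem integral_smul_add_integral_mul_smul [NormedAddCommGroup E] [NormedSpace ℝ E]
    [CompleteSpace E] {w c : α → ℝ} {g g' : α → E} {x : E} (hw : Integrable w μ)
    (hg' : Integrable (fun a => (c a * w a) • g' a) μ)
    (hx : ∀ᵐ a ∂μ, w a ≠ 0 → g a + c a • g' a = x) :
    ∫ a, w a • g a ∂μ + ∫ a, (c a * w a) • g' a ∂μ = (∫ a, w a ∂μ) • x := by
  have smul_eq_sub : (fun a => w a • g a) =ᵐ[μ] fun a => w a • x - (c a * w a) • g' a := by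
    filter_upwards [hx] with a ha
    rcases eq_or_ne (w a) 0 with h0 | h0
    · simp [h0]
    · rw [← ha h0]
      module
  rw [integral_congr_ae smul_eq_sub, integral_sub (hw.smul_const x) hg', integral_smul_const,
    sub_add_cancel]

theorem integrable_mul_of_continuousOn_of_support_subset [TopologicalSpace α] [T2Space α]
    [OpensMeasurableSpace α] {K : Set α} {c w : α → ℝ} (hK : IsCompact K)
    (hc : ContinuousOn c K) (hw : Integrable w μ) (hwK : Function.support w ⊆ K) :
    Integrable (fun a => c a * w a) μ :=
  (integrableOn_iff_integrable_of_support_subset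
    ((Function.support_mul_subset_right c w).trans hwK)).mp
    (hw.integrableOn.continuousOn_mul hc hK)

end WeightedIntegral

section ScaledMollifier

variable {φ : ℝ → ℝ} {ε : ℝ}

theorem integral_mollR (hε : 0 < ε) : ∫ x, mollR ε φ x = ∫ x, φ x := by
  simp only [mollR]
  rw [integral_const_mul, Measure.integral_comp_div, abs_of_pos hε, smul_eq_mul,
    inv_mul_cancel_left₀ hε.ne']

theorem support_mollR_subset {a b : ℝ} (hε : 0 < ε) (hφ : Function.support φ ⊆ Set.Icc a b) :
    Function.support (mollR ε φ) ⊆ Set.Icc (a * ε) (b * ε) := fun x hx => by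
  have hx' := hφ (right_ne_zero_of_mul hx)
  exact ⟨(le_div_iff₀ hε).mp hx'.1, (div_le_iff₀ hε).mp hx'.2⟩

end ScaledMollifier

section Segments

variable {n p k : ℕ} {P : ℕ → Euc n} {t : ℝ}

theorem segIdx_eq_of_mem_Ioc {r : ℕ} (hr : 1 ≤ r) (hrp : r ≤ p)
    (ht : t ∈ Set.Ioc ((r : ℝ) - 1) r) : segIdx p t = r := by
  have hceil : ⌈t⌉ = (r : ℤ) := Int.ceil_eq_iff.mpr (by exact_mod_cast ht)
  rw [segIdx, hceil]
  lia

theorem segIdx_mem_Icc (p : ℕ) (t : ℝ) : segIdx p t ∈ Set.Icc (1 : ℤ) (max 1 p) :=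
  ⟨le_max_left _ _, max_le_max_left _ (min_le_left _ _)⟩

theorem measurable_segIdx (p : ℕ) : Measurable (segIdx p) :=
  measurable_const.max (measurable_const.min Int.measurable_ceil)

theorem measurable_DfbarP (p : ℕ) (P : ℕ → Euc n) : Measurable (DfbarP p P) :=
  (Measurable.of_discrete (f := fun r : ℤ => P r.toNat - P (r - 1).toNat)).comp
    (measurable_segIdx p)

theorem finite_range_DfbarP (p : ℕ) (P : ℕ → Euc n) : (Set.range (DfbarP p P)).Finite := by
  refine ((Set.finite_Icc (1 : ℤ) (max 1 p)).image
    fun r => P r.toNat - P (r - 1).toNat).subset ?_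
  rintro _ ⟨t, rfl⟩
  exact ⟨segIdx p t, segIdx_mem_Icc p t, rfl⟩

theorem integrable_smul_DfbarP {μ : Measure ℝ} {w : ℝ → ℝ} (hw : Integrable w μ) (p : ℕ)
    (P : ℕ → Euc n) : Integrable (fun s => w s • DfbarP p P s) μ := by
  obtain ⟨C, hC⟩ := (finite_range_DfbarP p P).isBounded.exists_norm_le
  exact hw.smul_bdd C (measurable_DfbarP p P).aestronglyMeasurable
    (.of_forall fun s => hC _ ⟨s, rfl⟩)

theorem fbarP_add_smul_DfbarP_of_segIdx_eq (h : segIdx p t = k) :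
    fbarP p P t + ((k : ℝ) - t) • DfbarP p P t = P k := by
  simp only [fbarP, DfbarP, h, Int.toNat_natCast, Int.cast_natCast]
  module

theorem fbarP_add_smul_DfbarP_of_segIdx_eq_add_one (h : segIdx p t = k + 1) :
    fbarP p P t + ((k : ℝ) - t) • DfbarP p P t = P k := by
  simp only [fbarP, DfbarP, h, add_sub_cancel_right, Int.toNat_natCast, Int.cast_add,
    Int.cast_natCast, Int.cast_one]
  module

theorem fbarP_add_smul_DfbarP (hk : 1 ≤ k) (hkp : k < p)
    (ht : t ∈ Set.Ioc ((k : ℝ) - 1) (k + 1)) :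
    fbarP p P t + ((k : ℝ) - t) • DfbarP p P t = P k := by
  rcases le_or_gt t k with htk | hkt
  · exact fbarP_add_smul_DfbarP_of_segIdx_eq (segIdx_eq_of_mem_Ioc hk hkp.le ⟨ht.1, htk⟩)
  · refine fbarP_add_smul_DfbarP_of_segIdx_eq_add_one ?_
    exact_mod_cast segIdx_eq_of_mem_Ioc (r := k + 1) (by lia) hkp
      ⟨by push_cast; linarith, by exact_mod_cast ht.2⟩

theorem fbarP_natCast (hk : k ≤ p) : fbarP p P k = P k := by
  rcases Nat.eq_zero_or_pos k with rfl | hpos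
  · have h : segIdx p ((0 : ℕ) : ℝ) = (0 : ℕ) + 1 := by simp [segIdx]
    simpa using fbarP_add_smul_DfbarP_of_segIdx_eq_add_one (P := P) h
  · have h : segIdx p (k : ℝ) = k := segIdx_eq_of_mem_Ioc hpos hk ⟨sub_one_lt _, le_rfl⟩
    simpa using fbarP_add_smul_DfbarP_of_segIdx_eq (P := P) h

end Segments

theorem stmt13_general {n p k : ℕ} {P : ℕ → Euc n} {φ : ℝ → ℝ} {ε : ℝ}
    (hφ_int : ∫ x, φ x = 1) (hφ_supp : Function.support φ ⊆ Set.Icc (-1 : ℝ) 1)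
    (hε : ε ∈ Set.Ioc (0 : ℝ) 1) (hk : 1 ≤ k) (hkp : k < p) :
    FhatP ε φ p P k = P k ∧ fbarP p P k = P k := by
  refine ⟨?_, fbarP_natCast hkp.le⟩
  have mass_one : ∫ x, mollR ε φ x = 1 := (integral_mollR hε.1).trans hφ_int
  have integrable_moll : Integrable (mollR ε φ) := integrable_of_integral_eq_one mass_one
  have support_moll : Function.support (mollR ε φ) ⊆ Set.Icc (-1) 1 :=
    (support_mollR_subset hε.1 hφ_supp).trans
      (Set.Icc_subset_Icc (by linarith [hε.2]) (by linarith [hε.2]))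
  have integrable_moment : Integrable (fun x => x * mollR ε φ x) :=
    integrable_mul_of_continuousOn_of_support_subset isCompact_Icc continuousOn_id
      integrable_moll support_moll
  have tangent : ∀ᵐ s : ℝ, mollR ε φ (k - s) ≠ 0 →
      fbarP p P s + ((k : ℝ) - s) • DfbarP p P s = P k := by
    filter_upwards [Measure.ae_ne volume ((k : ℝ) - 1)] with s hs hne
    obtain ⟨hl, hr⟩ := support_moll hne
    have hs' : (k : ℝ) - 1 < s := lt_of_le_of_ne (by linarith) hs.symm
    exact fbarP_add_smul_DfbarP hk hkp ⟨hs', by linarith⟩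
  have average := integral_smul_add_integral_mul_smul (integrable_moll.comp_sub_left (k : ℝ))
    (integrable_smul_DfbarP (integrable_moment.comp_sub_left (k : ℝ)) p P) tangent
  rwa [integral_sub_left_eq_self (mollR ε φ), mass_one, one_smul] at average

theorem stmt13 (n : ℕ) (p : ℕ) (hp : 2 ≤ p) (P : ℕ → Euc n)
    -- `φ` is an even nonnegative mollifier on `ℝ` with support `[-1,1]`
    (φ : ℝ → ℝ) (hφ_smooth : ContDiff ℝ (⊤ : ℕ∞) φ)
    (hφ_int : ∫ x, φ x = 1) (hφ_nonneg : ∀ x, 0 ≤ φ x)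
    (hφ_even : ∀ x, φ (-x) = φ x)
    (hφ_supp : tsupport φ = Set.Icc (-1 : ℝ) 1) :
    -- all interior waypoints are preserved: `F̂_ε(k) = f(k) = P k`
    ∀ ε : ℝ, ε ∈ Set.Ioo (0 : ℝ) 1 → ∀ k : ℕ, 1 ≤ k → k ≤ p - 1 →
      FhatP ε φ p P (k : ℝ) = P k ∧ fbarP p P (k : ℝ) = P k := by
  intro ε hε k hk hkp
  exact stmt13_general hφ_int (hφ_supp ▸ subset_tsupport φ) ⟨hε.1, hε.2.le⟩ hk (by lia)
end
end
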